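/- arXiv:1610.03083 — 3 statements merged into one kernel-verified Lean document; each statement's English description precedes it below -/
import Mathlib

section
/- d metrizes vague convergence in M: for μ, μ₁, μ₂, … ∈ M, μₙ converges vaguely to μ as n → ∞ if and only if d(μₙ, μ) → 0 as n → ∞. -/
open MeasureTheory Filter Set

/-- The Lévy distance between two (nondecreasing) functions `F G : ℝ → ℝ`. -/
noncomputable def levyDist (F G : ℝ → ℝ) : ℝ :=
  sInf {h : ℝ | 0 ≤ h ∧ ∀ x : ℝ, F (x - h) - h ≤ G x ∧ G x ≤ F (x + h) + h}

/-- The distribution function of a measure on ℝ. -/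
noncomputable def distFun (μ : Measure ℝ) (s : ℝ) : ℝ := (μ (Iic s)).toReal

/-- The continuous "tent" function equal to `1` on `(-∞, a]`, `0` on `[b, ∞)` and affine
in between. -/
noncomputable def fTrunc (a b x : ℝ) : ℝ :=
  if x ≤ a then 1 else if b ≤ x then 0 else (b - x) / (b - a)

/-- The `k`-th truncation `μ^(k)` of a measure `μ` relative to the sequence `t`. -/
noncomputable def truncMeas (t : ℕ → ℝ) (k : ℕ) (μ : Measure ℝ) : Measure ℝ :=
  μ.withDensity (fun x => ENNReal.ofReal (fTrunc (t (k - 1)) (t k) x))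

/-- `d(μ,ν) = Σ_{k=1}^∞ 2^{-k} d_L(μ^(k), ν^(k)) / (1 + d_L(μ^(k), ν^(k)))`. -/
noncomputable def metD (t : ℕ → ℝ) (μ ν : Measure ℝ) : ℝ :=
  ∑' k : ℕ, ((2 : ℝ)⁻¹ ^ (k + 1)) *
    (levyDist (distFun (truncMeas t (k + 1) μ)) (distFun (truncMeas t (k + 1) ν)) /
      (1 + levyDist (distFun (truncMeas t (k + 1) μ)) (distFun (truncMeas t (k + 1) ν))))

/-!
The sum defining `metD` is dominated by a geometric series, so `metD t (μs n) μ → 0` exactly when,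
for every `k`, the Lévy distance between the `k`-th truncations tends to `0`.

If the Lévy distances of the truncations tend to `0`, then their distribution functions converge at
the continuity points of the limit, and left of `t (k - 1)` truncation does not change the
distribution function.

Conversely, the density `fTrunc a b` is the survival function `x ↦ ν [x, ∞)` of the uniform
distribution `ν` on `[a, b]`. By Tonelli the truncation therefore has distribution function
`s ↦ ∫ μ (-∞, min s u] dν(u)`, an average of values of the distribution function of `μ`. As `ν` does
not charge the countably many atoms of `μ`, dominated convergence carries vague convergence over to
the truncations, including their total masses. For monotone functions, convergence on a dense set
together with convergence of the extreme values implies convergence in Lévy distance.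
-/

open scoped Topology ENNReal

section SummableBounds

variable {ι κ : Type*} {l : Filter ι}

lemma tendsto_div_one_add_zero_iff {u : ι → ℝ} (hu : ∀ i, 0 ≤ u i) :
    Tendsto (fun i => u i / (1 + u i)) l (𝓝 0) ↔ Tendsto u l (𝓝 0) := by
  refine ⟨fun h => ?_, fun h => by simpa [Pi.div_def] using h.div (h.const_add 1) (by norm_num)⟩
  have h_inverse : Tendsto (fun i => u i / (1 + u i) / (1 - u i / (1 + u i))) l (𝓝 0) := by
    simpa [Pi.div_def] using h.div (h.const_sub 1) (by norm_num)
  refine h_inverse.congr fun i => ?_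
  have : 1 + u i ≠ 0 := by linarith [hu i]
  field_simp
  ring

lemma tendsto_tsum_zero_iff_of_nonneg_of_le {f : ι → κ → ℝ} {w : κ → ℝ} (hw : Summable w)
    (hf : ∀ i k, 0 ≤ f i k) (hfw : ∀ i k, f i k ≤ w k) :
    Tendsto (fun i => ∑' k, f i k) l (𝓝 0) ↔ ∀ k, Tendsto (fun i => f i k) l (𝓝 0) := by
  refine ⟨fun h k => ?_, fun h => ?_⟩
  · have hsum (i : ι) : Summable (f i) := hw.of_nonneg_of_le (hf i) (hfw i)
    exact squeeze_zero (fun i => hf i k) (fun i => (hsum i).le_tsum k fun j _ => hf i j) h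
  · simpa using tendsto_tsum_of_dominated_convergence hw h <| Eventually.of_forall fun i k => by
      simpa only [Real.norm_of_nonneg (hf i k)] using hfw i k

end SummableBounds

lemma eventually_forall_of_prod_nhds_of_prod_cocompact {ι X : Type*} [TopologicalSpace X]
    {l : Filter ι} {p : ι → X → Prop} (hloc : ∀ x, ∀ᶠ z in l ×ˢ 𝓝 x, p z.1 z.2)
    (hinf : ∀ᶠ z in l ×ˢ cocompact X, p z.1 z.2) : ∀ᶠ i in l, ∀ x, p i x := by
  obtain ⟨q, hq, r, hr, hqr⟩ := eventually_prod_iff.1 hinf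
  obtain ⟨K, hK, hKr⟩ := mem_cocompact.1 hr
  have hcompact : ∀ᶠ z in l ×ˢ 𝓝ˢ K, p z.1 z.2 :=
    hK.mem_prod_nhdsSet_of_forall fun x _ => hloc x
  filter_upwards [hq, hcompact.curry] with i hi hiK x
  by_cases hx : x ∈ K
  · exact hiK.self_of_nhdsSet x hx
  · exact hqr hi (hKr hx)

/-- The relation `F (x - h) - h ≤ G x ≤ F (x + h) + h` for all `x`: the distance `levyDist F G`
is the infimum of the `h ≥ 0` for which it holds. -/
def LevyClose (h : ℝ) (F G : ℝ → ℝ) : Prop :=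
  ∀ x : ℝ, F (x - h) - h ≤ G x ∧ G x ≤ F (x + h) + h

section LevyDist

variable {F G : ℝ → ℝ} {h k : ℝ}

lemma LevyClose.mono (hF : Monotone F) (hFG : LevyClose h F G) (hhk : h ≤ k) :
    LevyClose k F G := fun x =>
  ⟨by linarith [(hFG x).1, hF (sub_le_sub_left hhk x)],
    by linarith [(hFG x).2, hF (add_le_add_right hhk x)]⟩

lemma LevyClose.le_add (hFG : LevyClose h F G) (x : ℝ) : F x ≤ G (x + h) + h := by
  simpa using (hFG (x + h)).1

lemma LevyClose.sub_le (hFG : LevyClose h F G) (x : ℝ) : G (x - h) - h ≤ F x := by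
  simpa using (hFG (x - h)).2

lemma levyClose_of_mem_Icc {c C : ℝ} (hF : ∀ x, F x ∈ Icc c C) (hG : ∀ x, G x ∈ Icc c C) :
    LevyClose (C - c) F G := fun x =>
  ⟨by linarith [(hF (x - (C - c))).2, (hG x).1], by linarith [(hF (x + (C - c))).1, (hG x).2]⟩

lemma levyDist_nonneg (F G : ℝ → ℝ) : 0 ≤ levyDist F G :=
  Real.sInf_nonneg fun _ hh => hh.1

lemma LevyClose.levyDist_le (hFG : LevyClose h F G) (hh : 0 ≤ h) : levyDist F G ≤ h :=
  csInf_le ⟨0, fun _ hk => hk.1⟩ ⟨hh, hFG⟩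

-- Junk value: `levyDist F G = 0` if no `k ≥ 0` satisfies `LevyClose k F G`.
lemma levyClose_of_levyDist_lt (hF : Monotone F) (hfin : ∃ k ≥ 0, LevyClose k F G)
    (hlt : levyDist F G < h) : LevyClose h F G := by
  obtain ⟨k, hk, hkh⟩ := exists_lt_of_csInf_lt hfin hlt
  exact LevyClose.mono hF hk.2 hkh.le

end LevyDist

section LevyConvergence

variable {ι : Type*} {l : Filter ι} {Fs : ι → ℝ → ℝ} {F : ℝ → ℝ} {D : Set ℝ} {ε : ℝ}

theorem tendsto_apply_of_tendsto_levyDist (hFs : ∀ i, Monotone (Fs i))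
    (hfin : ∀ i, ∃ h ≥ 0, LevyClose h (Fs i) F)
    (hdist : Tendsto (fun i => levyDist (Fs i) F) l (𝓝 0)) {x : ℝ} (hx : ContinuousAt F x) :
    Tendsto (fun i => Fs i x) l (𝓝 (F x)) := by
  have hclose {δ : ℝ} (hδ : 0 < δ) : ∀ᶠ i in l, LevyClose δ (Fs i) F :=
    (hdist.eventually_lt_const hδ).mono fun i => levyClose_of_levyDist_lt (hFs i) (hfin i)
  have hlower : Tendsto (fun δ => F (x - δ) - δ) (𝓝[>] 0) (𝓝 (F x)) := by
    have hcont : ContinuousAt (fun δ => F (x - δ) - δ) 0 :=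
      (hx.comp_of_eq (by fun_prop) (sub_zero x)).sub continuousAt_id
    simpa using hcont.continuousWithinAt.tendsto
  have hupper : Tendsto (fun δ => F (x + δ) + δ) (𝓝[>] 0) (𝓝 (F x)) := by
    have hcont : ContinuousAt (fun δ => F (x + δ) + δ) 0 :=
      (hx.comp_of_eq (by fun_prop) (add_zero x)).add continuousAt_id
    simpa using hcont.continuousWithinAt.tendsto
  refine tendsto_order.2 ⟨fun a ha => ?_, fun a ha => ?_⟩
  · obtain ⟨δ, haδ, hδ⟩ := ((hlower.eventually_const_lt ha).and self_mem_nhdsWithin).exists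
    filter_upwards [hclose hδ] with i hi using haδ.trans_le (hi.sub_le x)
  · obtain ⟨δ, hδa, hδ⟩ := ((hupper.eventually_lt_const ha).and self_mem_nhdsWithin).exists
    filter_upwards [hclose hδ] with i hi using (hi.le_add x).trans_lt hδa

lemma eventually_prod_nhds_levy_bounds (hFs : ∀ i, Monotone (Fs i)) (hF : Monotone F)
    (hD : Dense D) (hconv : ∀ p ∈ D, Tendsto (fun i => Fs i p) l (𝓝 (F p))) (hε : 0 < ε) (x : ℝ) :
    ∀ᶠ z in l ×ˢ 𝓝 x, Fs z.1 (z.2 - ε) - ε ≤ F z.2 ∧ F z.2 ≤ Fs z.1 (z.2 + ε) + ε := by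
  obtain ⟨p, hpD, hxp, hpx⟩ := hD.exists_between (lt_add_of_pos_right x hε)
  obtain ⟨q, hqD, hxq, hqx⟩ := hD.exists_between (sub_lt_self x hε)
  have hnear : ∀ᶠ y in 𝓝 x, y ∈ Ioo q p ∩ Ioo (p - ε) (q + ε) :=
    inter_mem (Ioo_mem_nhds hqx hxp) (Ioo_mem_nhds (by linarith) (by linarith))
  have hlarge : ∀ᶠ i in l, F p - ε < Fs i p ∧ Fs i q < F q + ε :=
    ((hconv p hpD).eventually_const_lt (sub_lt_self _ hε)).and
      ((hconv q hqD).eventually_lt_const (lt_add_of_pos_right _ hε))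
  filter_upwards [hlarge.prod_mk hnear] with ⟨i, y⟩ ⟨⟨hip, hiq⟩, ⟨hqy, hyp⟩, hpy, hyq⟩
  constructor
  · linarith [hFs i (show y - ε ≤ q by linarith), hF hqy.le]
  · linarith [hFs i (show p ≤ y + ε by linarith), hF hyp.le]

lemma eventually_prod_atTop_levy_bounds (hFs : ∀ i, Monotone (Fs i)) (hF : Monotone F)
    (hD : Dense D) (hconv : ∀ p ∈ D, Tendsto (fun i => Fs i p) l (𝓝 (F p)))
    {Cs : ι → ℝ} {C : ℝ} (hCs : ∀ i x, Fs i x ≤ Cs i) (hC : Tendsto Cs l (𝓝 C))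
    (htop : Tendsto F atTop (𝓝 C)) (hε : 0 < ε) :
    ∀ᶠ z in l ×ˢ atTop, Fs z.1 (z.2 - ε) - ε ≤ F z.2 ∧ F z.2 ≤ Fs z.1 (z.2 + ε) + ε := by
  obtain ⟨p₀, hp₀⟩ := (htop.eventually_const_lt (sub_lt_self C hε)).exists
  obtain ⟨p, hpD, hp₀p⟩ := hD.exists_gt p₀
  have hp : C - ε < F p := hp₀.trans_le (hF hp₀p.le)
  have hFC (x : ℝ) : F x ≤ C := hF.ge_of_tendsto htop x
  have hlarge : ∀ᶠ i in l, C - ε < Fs i p ∧ Cs i < F p + ε :=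
    ((hconv p hpD).eventually_const_lt hp).and (hC.eventually_lt_const (by linarith))
  filter_upwards [hlarge.prod_mk (eventually_ge_atTop p)] with ⟨i, y⟩ ⟨⟨hip, hiC⟩, hpy⟩
  constructor
  · linarith [hCs i (y - ε), hF hpy]
  · linarith [hFC y, hFs i (show p ≤ y + ε by linarith)]

lemma eventually_prod_atBot_levy_bounds (hFs : ∀ i, Monotone (Fs i)) (hF : Monotone F)
    (hD : Dense D) (hconv : ∀ p ∈ D, Tendsto (fun i => Fs i p) l (𝓝 (F p)))
    {cs : ι → ℝ} {c : ℝ} (hcs : ∀ i x, cs i ≤ Fs i x) (hc : Tendsto cs l (𝓝 c))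
    (hbot : Tendsto F atBot (𝓝 c)) (hε : 0 < ε) :
    ∀ᶠ z in l ×ˢ atBot, Fs z.1 (z.2 - ε) - ε ≤ F z.2 ∧ F z.2 ≤ Fs z.1 (z.2 + ε) + ε := by
  obtain ⟨q₀, hq₀⟩ := (hbot.eventually_lt_const (lt_add_of_pos_right c hε)).exists
  obtain ⟨q, hqD, hqq₀⟩ := hD.exists_lt q₀
  have hq : F q < c + ε := (hF hqq₀.le).trans_lt hq₀
  have hcF (x : ℝ) : c ≤ F x := hF.le_of_tendsto hbot x
  have hlarge : ∀ᶠ i in l, Fs i q < c + ε ∧ F q - ε < cs i :=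
    ((hconv q hqD).eventually_lt_const hq).and (hc.eventually_const_lt (by linarith))
  filter_upwards [hlarge.prod_mk (eventually_le_atBot q)] with ⟨i, y⟩ ⟨⟨hiq, hic⟩, hyq⟩
  constructor
  · linarith [hcF y, hFs i (show y - ε ≤ q by linarith)]
  · linarith [hcs i (y + ε), hF hyq]

theorem tendsto_levyDist_zero_of_dense (hFs : ∀ i, Monotone (Fs i)) (hF : Monotone F)
    (hD : Dense D) (hconv : ∀ p ∈ D, Tendsto (fun i => Fs i p) l (𝓝 (F p)))
    {cs Cs : ι → ℝ} {c C : ℝ} (hmem : ∀ i x, Fs i x ∈ Icc (cs i) (Cs i))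
    (hc : Tendsto cs l (𝓝 c)) (hC : Tendsto Cs l (𝓝 C))
    (hbot : Tendsto F atBot (𝓝 c)) (htop : Tendsto F atTop (𝓝 C)) :
    Tendsto (fun i => levyDist (Fs i) F) l (𝓝 0) := by
  have hclose {ε : ℝ} (hε : 0 < ε) : ∀ᶠ i in l, LevyClose ε (Fs i) F := by
    refine eventually_forall_of_prod_nhds_of_prod_cocompact
      (eventually_prod_nhds_levy_bounds hFs hF hD hconv hε) ?_
    rw [cocompact_eq_atBot_atTop, prod_sup, eventually_sup]
    exact ⟨eventually_prod_atBot_levy_bounds hFs hF hD hconv (fun i x => (hmem i x).1) hc hbot hε,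
      eventually_prod_atTop_levy_bounds hFs hF hD hconv (fun i x => (hmem i x).2) hC htop hε⟩
  refine tendsto_order.2 ⟨fun a ha => Eventually.of_forall fun i =>
    ha.trans_le (levyDist_nonneg _ _), fun a ha => ?_⟩
  obtain ⟨ε, hε, hεa⟩ := exists_between ha
  filter_upwards [hclose hε] with i hi using (hi.levyDist_le hε.le).trans_lt hεa

end LevyConvergence

/-- Membership in the class `M` of measures on `ℝ` whose distribution function is finite. -/
def FiniteOnIic (μ : Measure ℝ) : Prop :=
  ∀ s : ℝ, μ (Iic s) < ⊤

lemma distFun_nonneg (μ : Measure ℝ) (s : ℝ) : 0 ≤ distFun μ s :=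
  ENNReal.toReal_nonneg

namespace FiniteOnIic

variable {μ ν : Measure ℝ}

lemma mono (hμ : FiniteOnIic μ) (hνμ : ν ≤ μ) : FiniteOnIic ν :=
  fun s => (hνμ _).trans_lt (hμ s)

lemma isLocallyFiniteMeasure (hμ : FiniteOnIic μ) : IsLocallyFiniteMeasure μ :=
  ⟨fun x => ⟨Iic (x + 1), Iic_mem_nhds (lt_add_one x), hμ _⟩⟩

lemma countable_setOf_atom (hμ : FiniteOnIic μ) : {s : ℝ | μ {s} ≠ 0}.Countable := by
  have := hμ.isLocallyFiniteMeasure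
  simpa [pos_iff_ne_zero] using Measure.countable_meas_level_set_pos (μ := μ) measurable_id

lemma dense_setOf_singleton_null (hμ : FiniteOnIic μ) : Dense {s : ℝ | μ {s} = 0} := by
  simpa [compl_ofPred] using hμ.countable_setOf_atom.dense_compl ℝ

lemma monotone_distFun (hμ : FiniteOnIic μ) : Monotone (distFun μ) := fun _ y hxy =>
  ENNReal.toReal_mono (hμ y).ne (measure_mono (Iic_subset_Iic.2 hxy))

lemma distFun_sub_distFun (hμ : FiniteOnIic μ) {x y : ℝ} (hxy : x ≤ y) :
    distFun μ y - distFun μ x = μ.real (Ioc x y) := by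
  rw [← Iic_sdiff_Iic, measureReal_sdiff (Iic_subset_Iic.2 hxy) measurableSet_Iic (hμ y).ne]
  rfl

lemma tendsto_distFun_atBot (hμ : FiniteOnIic μ) : Tendsto (distFun μ) atBot (𝓝 0) := by
  have hlim := tendsto_measure_iInter_atBot (μ := μ) (s := Iic)
    (fun _ => measurableSet_Iic.nullMeasurableSet) monotone_Iic ⟨(0 : ℝ), (hμ 0).ne⟩
  rw [iInter_Iic_eq_empty_iff.2 (by simp [range_id'] : ¬BddBelow (range fun x : ℝ => x)),
    measure_empty] at hlim
  exact (ENNReal.tendsto_toReal ENNReal.zero_ne_top).comp hlim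

lemma continuousAt_distFun (hμ : FiniteOnIic μ) {s : ℝ} (hs : μ {s} = 0) :
    ContinuousAt (distFun μ) s := by
  have := hμ.isLocallyFiniteMeasure
  have hball : Tendsto (fun δ => μ.real (Icc (s - δ) (s + δ))) (𝓝[≥] 0) (𝓝 0) := by
    have hlim := tendsto_measure_Icc_nhdsWithin_right μ s
    rw [hs] at hlim
    exact (ENNReal.tendsto_toReal ENNReal.zero_ne_top).comp hlim
  have hdist : Tendsto (fun x => dist x s) (𝓝 s) (𝓝[≥] 0) :=
    tendsto_nhdsWithin_iff.2 ⟨tendsto_iff_dist_tendsto_zero.1 tendsto_id,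
      Eventually.of_forall fun _ => dist_nonneg⟩
  refine tendsto_iff_dist_tendsto_zero.2 (squeeze_zero (fun _ => dist_nonneg) (fun x => ?_)
    (hball.comp hdist))
  rw [Function.comp_apply, Real.dist_eq, Real.dist_eq]
  rcases le_total x s with hxs | hsx
  · rw [abs_sub_comm, abs_of_nonneg (sub_nonneg.2 (hμ.monotone_distFun hxs)),
      hμ.distFun_sub_distFun hxs, abs_sub_comm, abs_of_nonneg (sub_nonneg.2 hxs)]
    exact measureReal_mono (fun y hy => ⟨by linarith [hy.1], by linarith [hy.2]⟩)
      isCompact_Icc.measure_ne_top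
  · rw [abs_of_nonneg (sub_nonneg.2 (hμ.monotone_distFun hsx)),
      hμ.distFun_sub_distFun hsx, abs_of_nonneg (sub_nonneg.2 hsx)]
    exact measureReal_mono (fun y hy => ⟨by linarith [hy.1], by linarith [hy.2]⟩)
      isCompact_Icc.measure_ne_top

end FiniteOnIic

/-- Vague convergence in `M`, along an arbitrary filter: distribution functions converge at every
point which is not an atom of the limit. -/
def TendstoVaguely {ι : Type*} (μs : ι → Measure ℝ) (l : Filter ι) (μ : Measure ℝ) : Prop :=
  ∀ s : ℝ, μ {s} = 0 → Tendsto (fun i => distFun (μs i) s) l (𝓝 (distFun μ s))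

lemma withDensity_measure_Ici_apply_Iic {α : Type*} [LinearOrder α] [TopologicalSpace α]
    [OrderClosedTopology α] [SecondCountableTopology α] [MeasurableSpace α] [BorelSpace α]
    (μ ν : Measure α) [SFinite μ] [SFinite ν] (s : α) :
    μ.withDensity (fun x => ν (Ici x)) (Iic s) = ∫⁻ u, μ (Iic (min s u)) ∂ν := by
  have hle : MeasurableSet {p : α × α | p.1 ≤ p.2} := measurableSet_le measurable_fst measurable_snd
  calc μ.withDensity (fun x => ν (Ici x)) (Iic s)
      = (μ.restrict (Iic s)).prod ν {p | p.1 ≤ p.2} := by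
        rw [withDensity_apply _ measurableSet_Iic, Measure.prod_apply hle]
        rfl
    _ = ∫⁻ u, μ (Iic (min s u)) ∂ν := by
        rw [Measure.prod_apply_symm hle]
        refine lintegral_congr fun u => ?_
        rw [min_comm, ← Iic_inter_Iic]
        exact Measure.restrict_apply measurableSet_Iic

lemma TendstoVaguely.tendsto_lintegral_measure_Iic_min {ι : Type*} {l : Filter ι}
    [l.IsCountablyGenerated] {μs : ι → Measure ℝ} {μ : Measure ℝ} (h : TendstoVaguely μs l μ)
    (hμ : FiniteOnIic μ) (hμs : ∀ i, FiniteOnIic (μs i)) (ν : Measure ℝ) [IsFiniteMeasure ν]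
    (hν : ∀ᵐ u ∂ν, μ {u} = 0) {s : ℝ} (hs : μ {s} = 0) :
    Tendsto (fun i => ∫⁻ u, μs i (Iic (min s u)) ∂ν) l (𝓝 (∫⁻ u, μ (Iic (min s u)) ∂ν)) := by
  have hconv {u : ℝ} (hu : μ {u} = 0) : Tendsto (fun i => μs i (Iic u)) l (𝓝 (μ (Iic u))) :=
    (ENNReal.tendsto_toReal_iff (fun i => (hμs i u).ne) (hμ u).ne).1 (h u hu)
  refine tendsto_lintegral_filter_of_dominated_convergence (fun _ => μ (Iic s) + 1) ?_ ?_ ?_ ?_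
  · exact Eventually.of_forall fun i => Monotone.measurable fun u v huv =>
      measure_mono (Iic_subset_Iic.2 (min_le_min_left s huv))
  · have hlt : μ (Iic s) < μ (Iic s) + 1 := ENNReal.lt_add_right (hμ s).ne one_ne_zero
    filter_upwards [(hconv hs).eventually_lt_const hlt] with i hi
    exact Eventually.of_forall fun u =>
      (measure_mono (Iic_subset_Iic.2 (min_le_left s u))).trans hi.le
  · simpa using ENNReal.mul_ne_top (by simp [(hμ s).ne]) (measure_ne_top ν univ)
  · filter_upwards [hν] with u hu
    rcases min_choice s u with hmin | hmin <;> rw [hmin]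
    exacts [hconv hs, hconv hu]

/-- The measure with density `fTrunc a b` with respect to `μ`; the truncation `truncMeas t (k + 1)`
is the case `a = t k`, `b = t (k + 1)`. -/
noncomputable def truncBetween (a b : ℝ) (μ : Measure ℝ) : Measure ℝ :=
  μ.withDensity fun x => ENNReal.ofReal (fTrunc a b x)

section Truncation

variable {ι : Type*} {l : Filter ι} {a b s : ℝ} {μ : Measure ℝ} {μs : ι → Measure ℝ}

lemma truncMeas_succ (t : ℕ → ℝ) (k : ℕ) (μ : Measure ℝ) :
    truncMeas t (k + 1) μ = truncBetween (t k) (t (k + 1)) μ :=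
  rfl

lemma ofReal_fTrunc (hab : a < b) (x : ℝ) :
    ENNReal.ofReal (fTrunc a b x) = ProbabilityTheory.cond volume (Icc a b) (Ici x) := by
  have hpos : 0 < b - a := sub_pos.2 hab
  have hcond : ProbabilityTheory.cond volume (Icc a b) (Ici x) =
      ENNReal.ofReal ((b - a)⁻¹ * (b - max a x)) := by
    have hinter : Icc a b ∩ Ici x = Icc (max a x) b := by
      rw [← Ici_inter_Iic, inter_right_comm, Ici_inter_Ici, Ici_inter_Iic]
    rw [ProbabilityTheory.cond_apply measurableSet_Icc, hinter, Real.volume_Icc, Real.volume_Icc,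
      ← ENNReal.ofReal_inv_of_pos hpos, ← ENNReal.ofReal_mul (by positivity)]
  rw [hcond, fTrunc]
  split_ifs with hxa hbx
  · rw [max_eq_left hxa, inv_mul_cancel₀ hpos.ne']
  · rw [max_eq_right (not_le.1 hxa).le, ENNReal.ofReal_zero, ENNReal.ofReal_of_nonpos]
    exact mul_nonpos_of_nonneg_of_nonpos (by positivity) (by linarith)
  · rw [max_eq_right (not_le.1 hxa).le, div_eq_inv_mul]

lemma truncBetween_apply_Iic [SFinite μ] (hab : a < b) :
    truncBetween a b μ (Iic s) =
      ∫⁻ u, μ (Iic (min s u)) ∂ProbabilityTheory.cond volume (Icc a b) := by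
  simp only [truncBetween, ofReal_fTrunc hab, withDensity_measure_Ici_apply_Iic]

lemma fTrunc_le_one (a b x : ℝ) : fTrunc a b x ≤ 1 := by
  unfold fTrunc
  split_ifs with hxa hbx
  · exact le_rfl
  · exact zero_le_one
  · exact div_le_one_of_le₀ (by linarith) (by linarith)

lemma truncBetween_le (a b : ℝ) (μ : Measure ℝ) : truncBetween a b μ ≤ μ :=
  calc truncBetween a b μ ≤ μ.withDensity 1 := withDensity_mono <| Eventually.of_forall fun x =>
        ENNReal.ofReal_le_one.2 (fTrunc_le_one a b x)
    _ = μ := withDensity_one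

lemma FiniteOnIic.truncBetween (hμ : FiniteOnIic μ) (a b : ℝ) :
    FiniteOnIic (truncBetween a b μ) :=
  hμ.mono (truncBetween_le a b μ)

lemma distFun_truncBetween_of_le (hs : s ≤ a) : distFun (truncBetween a b μ) s = distFun μ s := by
  rw [distFun, truncBetween, withDensity_apply _ measurableSet_Iic,
    setLIntegral_congr_fun (g := 1) measurableSet_Iic fun x hx => by
      simp [fTrunc, (mem_Iic.1 hx).trans hs]]
  simp [distFun]

lemma distFun_truncBetween_of_ge (hab : a ≤ b) (hs : b ≤ s) :
    distFun (truncBetween a b μ) s = distFun (truncBetween a b μ) b := by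
  have hnull : truncBetween a b μ (Ioc b s) = 0 := by
    rw [truncBetween, withDensity_apply _ measurableSet_Ioc,
      setLIntegral_congr_fun (g := 0) measurableSet_Ioc fun x hx => by
        simp [fTrunc, hx.1.le, (hab.trans_lt hx.1).not_ge]]
    simp
  rw [distFun, distFun, ← Iic_union_Ioc_eq_Iic hs,
    measure_congr (union_ae_eq_left_of_ae_eq_empty (ae_eq_empty.2 hnull))]

lemma tendsto_distFun_truncBetween_atTop (hab : a ≤ b) (μ : Measure ℝ) :
    Tendsto (distFun (truncBetween a b μ)) atTop (𝓝 (distFun (truncBetween a b μ) b)) :=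
  tendsto_atTop_of_eventually_const fun _ hs => distFun_truncBetween_of_ge hab hs

lemma distFun_truncBetween_mem_Icc (hμ : FiniteOnIic μ) (hab : a ≤ b) (x : ℝ) :
    distFun (truncBetween a b μ) x ∈ Icc 0 (distFun (truncBetween a b μ) b) :=
  ⟨distFun_nonneg _ _, (hμ.truncBetween a b).monotone_distFun.ge_of_tendsto
    (tendsto_distFun_truncBetween_atTop hab μ) x⟩

theorem TendstoVaguely.tendsto_distFun_truncBetween [l.IsCountablyGenerated]
    (h : TendstoVaguely μs l μ) (hμ : FiniteOnIic μ) (hμs : ∀ i, FiniteOnIic (μs i))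
    (hab : a < b) (hs : μ {s} = 0) :
    Tendsto (fun i => distFun (truncBetween a b (μs i)) s) l
      (𝓝 (distFun (truncBetween a b μ) s)) := by
  have := hμ.isLocallyFiniteMeasure
  have := fun i => (hμs i).isLocallyFiniteMeasure
  refine (ENNReal.tendsto_toReal_iff (fun i => ((hμs i).truncBetween a b s).ne)
    (hμ.truncBetween a b s).ne).2 ?_
  have hnonatom : ∀ᵐ u, μ {u} = 0 := by simpa using hμ.countable_setOf_atom.ae_notMem volume
  simpa only [truncBetween_apply_Iic hab] using
    h.tendsto_lintegral_measure_Iic_min hμ hμs _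
      (ProbabilityTheory.cond_absolutelyContinuous.ae_le hnonatom) hs

theorem TendstoVaguely.tendsto_levyDist_truncBetween [l.IsCountablyGenerated]
    (h : TendstoVaguely μs l μ) (hμ : FiniteOnIic μ) (hμs : ∀ i, FiniteOnIic (μs i)) (hab : a < b) :
    Tendsto (fun i => levyDist (distFun (truncBetween a b (μs i))) (distFun (truncBetween a b μ)))
      l (𝓝 0) := by
  have hmass : Tendsto (fun i => distFun (truncBetween a b (μs i)) b) l
      (𝓝 (distFun (truncBetween a b μ) b)) := by
    obtain ⟨q, hq, hbq⟩ := hμ.dense_setOf_singleton_null.exists_gt b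
    simpa only [distFun_truncBetween_of_ge hab.le hbq.le] using
      h.tendsto_distFun_truncBetween hμ hμs hab hq
  exact tendsto_levyDist_zero_of_dense (fun i => ((hμs i).truncBetween a b).monotone_distFun)
    (hμ.truncBetween a b).monotone_distFun hμ.dense_setOf_singleton_null
    (fun p hp => h.tendsto_distFun_truncBetween hμ hμs hab hp)
    (fun i => distFun_truncBetween_mem_Icc (hμs i) hab.le) tendsto_const_nhds hmass
    (hμ.truncBetween a b).tendsto_distFun_atBot (tendsto_distFun_truncBetween_atTop hab.le μ)

theorem tendsto_distFun_of_tendsto_levyDist_truncBetween (hμ : FiniteOnIic μ)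
    (hμs : ∀ i, FiniteOnIic (μs i)) (hab : a ≤ b)
    (hdist : Tendsto (fun i => levyDist (distFun (truncBetween a b (μs i)))
      (distFun (truncBetween a b μ))) l (𝓝 0)) (hsa : s ≤ a) (hs : μ {s} = 0) :
    Tendsto (fun i => distFun (μs i) s) l (𝓝 (distFun μ s)) := by
  have hfin (i : ι) : ∃ h ≥ 0, LevyClose h (distFun (truncBetween a b (μs i)))
      (distFun (truncBetween a b μ)) := by
    set C := max (distFun (truncBetween a b (μs i)) b) (distFun (truncBetween a b μ) b)
    have hC : 0 ≤ C := (distFun_nonneg _ _).trans (le_max_left _ _)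
    refine ⟨C - 0, sub_nonneg.2 hC, levyClose_of_mem_Icc ?_ ?_⟩
    · exact fun x => Icc_subset_Icc_right (le_max_left _ _)
        (distFun_truncBetween_mem_Icc (hμs i) hab x)
    · exact fun x => Icc_subset_Icc_right (le_max_right _ _)
        (distFun_truncBetween_mem_Icc hμ hab x)
  have hcont : ContinuousAt (distFun (truncBetween a b μ)) s :=
    (hμ.truncBetween a b).continuousAt_distFun (withDensity_absolutelyContinuous _ _ hs)
  simpa only [distFun_truncBetween_of_le hsa] using tendsto_apply_of_tendsto_levyDist
    (fun i => ((hμs i).truncBetween a b).monotone_distFun) hfin hdist hcont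

end Truncation

lemma tendsto_metD_zero_iff {ι : Type*} {l : Filter ι} (t : ℕ → ℝ) (μs : ι → Measure ℝ)
    (μ : Measure ℝ) :
    Tendsto (fun i => metD t (μs i) μ) l (𝓝 0) ↔
      ∀ k, Tendsto (fun i => levyDist (distFun (truncBetween (t k) (t (k + 1)) (μs i)))
        (distFun (truncBetween (t k) (t (k + 1)) μ))) l (𝓝 0) := by
  have hw : Summable fun k : ℕ => (2 : ℝ)⁻¹ ^ (k + 1) :=
    (summable_nat_add_iff 1).2 (summable_geometric_of_lt_one (by norm_num) (by norm_num))
  have hpos (F G : ℝ → ℝ) : 0 ≤ levyDist F G / (1 + levyDist F G) :=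
    div_nonneg (levyDist_nonneg F G) (by linarith [levyDist_nonneg F G])
  have hle (F G : ℝ → ℝ) : levyDist F G / (1 + levyDist F G) ≤ 1 :=
    div_le_one_of_le₀ (by linarith) (by linarith [levyDist_nonneg F G])
  simp only [metD, truncMeas_succ]
  rw [tendsto_tsum_zero_iff_of_nonneg_of_le hw (fun i k => mul_nonneg (by positivity) (hpos _ _))
    fun i k => mul_le_of_le_one_right (by positivity) (hle _ _)]
  refine forall_congr' fun k => ?_
  rw [← tendsto_div_one_add_zero_iff fun i => levyDist_nonneg _ _]
  have hweight : (2 : ℝ)⁻¹ ^ (k + 1) ≠ 0 := by positivity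
  simpa only [smul_eq_mul, mul_zero] using tendsto_const_smul_iff₀ (a := (0 : ℝ)) hweight

theorem metD_metrizes_vague_general {ι : Type*} {l : Filter ι} [l.IsCountablyGenerated]
    {t : ℕ → ℝ} (ht : StrictMono t) (htop : Tendsto t atTop atTop) {μ : Measure ℝ}
    {μs : ι → Measure ℝ} (hμ : FiniteOnIic μ) (hμs : ∀ i, FiniteOnIic (μs i)) :
    TendstoVaguely μs l μ ↔ Tendsto (fun i => metD t (μs i) μ) l (𝓝 0) := by
  rw [tendsto_metD_zero_iff]
  refine ⟨fun h k => h.tendsto_levyDist_truncBetween hμ hμs (ht k.lt_succ_self), fun h s hs => ?_⟩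
  obtain ⟨k, hsk⟩ := (htop.eventually_ge_atTop s).exists
  exact tendsto_distFun_of_tendsto_levyDist_truncBetween hμ hμs (ht k.lt_succ_self).le (h k) hsk hs

/-- `d` metrizes vague convergence in `M`. -/
theorem metD_metrizes_vague (t : ℕ → ℝ) (ht : StrictMono t) (htop : Tendsto t atTop atTop)
    (μ : Measure ℝ) (μs : ℕ → Measure ℝ)
    (hμ : ∀ s : ℝ, μ (Iic s) < ⊤) (hμs : ∀ n : ℕ, ∀ s : ℝ, μs n (Iic s) < ⊤) :
    (∀ s : ℝ, μ {s} = 0 →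
        Tendsto (fun n : ℕ => distFun (μs n) s) atTop (nhds (distFun μ s))) ↔
      Tendsto (fun n : ℕ => metD t (μs n) μ) atTop (nhds 0) :=
  metD_metrizes_vague_general ht htop hμ hμs
end

section
/- For every c > 0, a > 0 and x ∈ (0,1), n a L_n(x) → M(x) as the integer n → ∞. -/
open MeasureTheory Filter Set

/-- `L_n(x) = [Γ(c)/(Γ(c/n)Γ(c-c/n))] ∫_x^1 s^{c/n-1} (1-s)^{c(1-1/n)-1} ds`. -/
noncomputable def Lfun (c : ℝ) (n : ℕ) (x : ℝ) : ℝ :=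
  Real.Gamma c / (Real.Gamma (c / n) * Real.Gamma (c - c / n)) *
    ∫ s in Ioo x 1, s ^ (c / n - 1) * (1 - s) ^ (c * (1 - 1 / (n : ℝ)) - 1)

/-- `M(x) = a c ∫_x^1 s^{-1} (1-s)^{c-1} ds`. -/
noncomputable def Mfun (c a : ℝ) (x : ℝ) : ℝ :=
  a * c * ∫ s in Ioo x 1, s ^ (-1 : ℝ) * (1 - s) ^ (c - 1)

/-!
`L_n(x)` is the upper tail at `x` of the Beta distribution with parameters `p = c / n` and
`q = c - c / n`. Since `Γ` has a simple pole with residue `1` at `0`, `p * B(p, q) → 1` as `p → 0`.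
Hence dividing the tail by `p` cancels the degenerating normalization, while the tail integral,
which stays away from the singularity at `0`, is continuous in `(p, q)` by dominated convergence.
-/

open ProbabilityTheory Topology

/-- The upper incomplete Beta integral `∫_x^1 s^{p-1} (1-s)^{q-1} ds`, which is the tail at `x` of
the Beta distribution with parameters `p` and `q` before normalization by `beta p q`. For `0 < x`
and `0 < q` it converges for every real `p`, in particular for `p = 0`. -/
noncomputable def upperBetaIntegral (x p q : ℝ) : ℝ :=
  ∫ s in Ioo x 1, s ^ (p - 1) * (1 - s) ^ (q - 1)

theorem integrableOn_one_sub_rpow {q : ℝ} (hq : -1 < q) (x : ℝ) :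
    IntegrableOn (fun s : ℝ => (1 - s) ^ q) (Ioo x 1) := by
  have integrable_reflected : IntervalIntegrable (fun s : ℝ => (1 - s) ^ q) volume 1 x := by
    simpa using
      (intervalIntegral.intervalIntegrable_rpow' (a := 0) (b := 1 - x) hq).comp_sub_left 1
  exact integrable_reflected.2.mono_set Ioo_subset_Ioc_self

theorem integrableOn_rpow_mul_one_sub_rpow {x q : ℝ} (hx : 0 < x) (p : ℝ) (hq : -1 < q) :
    IntegrableOn (fun s : ℝ => s ^ p * (1 - s) ^ q) (Ioo x 1) := by
  have continuousOn_rpow : ContinuousOn (fun s : ℝ => s ^ p) (Icc x 1) :=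
    continuousOn_id.rpow_const fun s hs => Or.inl (hx.trans_le hs.1).ne'
  exact (integrableOn_one_sub_rpow hq x).continuousOn_mul_of_subset continuousOn_rpow
    isCompact_Icc measurableSet_Ioo Ioo_subset_Icc_self

theorem norm_rpow_mul_one_sub_rpow_le {s p q p₀ q₀ : ℝ} (hs : s ∈ Ioo (0 : ℝ) 1) (hp : p₀ ≤ p)
    (hq : q₀ ≤ q) : ‖s ^ p * (1 - s) ^ q‖ ≤ s ^ p₀ * (1 - s) ^ q₀ := by
  have one_sub_pos : 0 < 1 - s := sub_pos.2 hs.2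
  have s_pos : 0 < s := hs.1
  rw [Real.norm_of_nonneg (by positivity)]
  gcongr ?_ * ?_
  · exact Real.rpow_le_rpow_of_exponent_ge s_pos hs.2.le hp
  · exact Real.rpow_le_rpow_of_exponent_ge one_sub_pos (by linarith) hq

theorem continuousAt_upperBetaIntegral {x q : ℝ} (hx : 0 < x) (p : ℝ) (hq : 0 < q) :
    ContinuousAt (fun z : ℝ × ℝ => upperBetaIntegral x z.1 z.2) (p, q) := by
  have mem_unit {s : ℝ} (hs : s ∈ Ioo x 1) : s ∈ Ioo (0 : ℝ) 1 := ⟨hx.trans hs.1, hs.2⟩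
  have eventually_exponents_ge : ∀ᶠ z : ℝ × ℝ in 𝓝 (p, q), p - 1 ≤ z.1 ∧ q / 2 ≤ z.2 :=
    (continuousAt_fst.tendsto.eventually_const_le (sub_one_lt p)).and
      (continuousAt_snd.tendsto.eventually_const_le (half_lt_self hq))
  refine continuousAt_of_dominated (bound := fun s => s ^ (p - 1 - 1) * (1 - s) ^ (q / 2 - 1))
    (.of_forall fun z => Measurable.aestronglyMeasurable (by fun_prop)) ?_
    (integrableOn_rpow_mul_one_sub_rpow hx _ (by linarith))
    (ae_restrict_of_forall_mem measurableSet_Ioo fun s hs => ?_)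
  · filter_upwards [eventually_exponents_ge] with z hz
    exact ae_restrict_of_forall_mem measurableSet_Ioo fun s hs =>
      norm_rpow_mul_one_sub_rpow_le (mem_unit hs) (sub_le_sub_right hz.1 1)
        (sub_le_sub_right hz.2 1)
  · exact (continuousAt_const.rpow (by fun_prop) (Or.inl (mem_unit hs).1.ne')).mul
      (continuousAt_const.rpow (by fun_prop) (Or.inl (sub_pos.2 hs.2).ne'))

theorem ne_neg_natCast_of_pos {q : ℝ} (hq : 0 < q) (m : ℕ) : q ≠ -m := by
  have := m.cast_nonneg (α := ℝ)
  linarith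

theorem tendsto_self_mul_realGamma_nhdsNE_zero :
    Tendsto (fun p : ℝ => p * Real.Gamma p) (𝓝[≠] 0) (𝓝 1) := by
  have continuousAt_Gamma_one : ContinuousAt Real.Gamma 1 :=
    (Real.differentiableAt_Gamma (ne_neg_natCast_of_pos one_pos)).continuousAt
  have continuousAt_Gamma_add_one : ContinuousAt (fun p : ℝ => Real.Gamma (p + 1)) 0 :=
    ContinuousAt.comp' (by simpa using continuousAt_Gamma_one) (by fun_prop)
  refine tendsto_nhdsWithin_congr (fun p hp => Real.Gamma_add_one hp) ?_
  simpa using continuousAt_Gamma_add_one.tendsto.mono_left nhdsWithin_le_nhds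

theorem tendsto_mul_beta_nhdsNE_zero {q : ℝ} (hq : ∀ m : ℕ, q ≠ -m) :
    Tendsto (fun z : ℝ × ℝ => z.1 * beta z.1 z.2) (𝓝[≠] 0 ×ˢ 𝓝 q) (𝓝 1) := by
  have tendsto_fst_zero : Tendsto Prod.fst (𝓝[≠] (0 : ℝ) ×ˢ 𝓝 q) (𝓝 0) :=
    tendsto_fst.mono_right nhdsWithin_le_nhds
  have continuousAt_Gamma : ContinuousAt Real.Gamma q :=
    (Real.differentiableAt_Gamma hq).continuousAt
  have tendsto_add : Tendsto (fun z : ℝ × ℝ => z.1 + z.2) (𝓝[≠] (0 : ℝ) ×ˢ 𝓝 q) (𝓝 q) := by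
    simpa using tendsto_fst_zero.add tendsto_snd
  have tendsto_quotient := ((tendsto_self_mul_realGamma_nhdsNE_zero.comp tendsto_fst).mul
    (continuousAt_Gamma.tendsto.comp tendsto_snd)).div
      (continuousAt_Gamma.tendsto.comp tendsto_add) (Real.Gamma_ne_zero hq)
  rw [one_mul, div_self (Real.Gamma_ne_zero hq)] at tendsto_quotient
  refine tendsto_quotient.congr fun z => ?_
  simp only [Pi.div_apply, Function.comp_apply, beta, mul_assoc, mul_div_assoc]

theorem tendsto_upperBetaIntegral_div_mul_beta {x q : ℝ} (hx : 0 < x) (hq : 0 < q) :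
    Tendsto (fun z : ℝ × ℝ => upperBetaIntegral x z.1 z.2 / (z.1 * beta z.1 z.2))
      (𝓝[≠] 0 ×ˢ 𝓝 q) (𝓝 (upperBetaIntegral x 0 q)) := by
  have tendsto_integral : Tendsto (fun z : ℝ × ℝ => upperBetaIntegral x z.1 z.2)
      (𝓝[≠] 0 ×ˢ 𝓝 q) (𝓝 (upperBetaIntegral x 0 q)) :=
    (continuousAt_upperBetaIntegral hx 0 hq).tendsto.mono_left <|
      (Filter.prod_mono_left _ nhdsWithin_le_nhds).trans_eq nhds_prod_eq.symm
  simpa only [div_one] using!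
    tendsto_integral.div (tendsto_mul_beta_nhdsNE_zero (ne_neg_natCast_of_pos hq)) one_ne_zero

theorem Lfun_eq_upperBetaIntegral_div_beta (c : ℝ) (n : ℕ) (x : ℝ) :
    Lfun c n x = upperBetaIntegral x (c / n) (c - c / n) / beta (c / n) (c - c / n) := by
  rw [Lfun, upperBetaIntegral, beta, add_sub_cancel, mul_one_sub, mul_one_div, div_div_eq_mul_div,
    div_mul_eq_mul_div, mul_comm (Real.Gamma c)]

theorem Mfun_eq_mul_upperBetaIntegral (c a x : ℝ) :
    Mfun c a x = a * c * upperBetaIntegral x 0 c := by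
  rw [Mfun, upperBetaIntegral, zero_sub]

theorem tendsto_const_div_natCast_nhdsNE_zero {c : ℝ} (hc : c ≠ 0) :
    Tendsto (fun n : ℕ => c / n) atTop (𝓝[≠] 0) := by
  refine tendsto_nhdsWithin_iff.2 ⟨tendsto_const_div_atTop_nhds_zero_nat c, ?_⟩
  filter_upwards [eventually_ne_atTop 0] with n hn
  exact div_ne_zero hc (Nat.cast_ne_zero.2 hn)

/-- for every `c > 0`, `a > 0` and `x ∈ (0,1)`, `n a L_n(x) → M(x)` as
`n → ∞`. -/
theorem tendsto_n_a_Lfun (c a : ℝ) (hc : 0 < c) (ha : 0 < a) (x : ℝ)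
    (hx : x ∈ Ioo (0 : ℝ) 1) :
    Tendsto (fun n : ℕ => (n : ℝ) * a * Lfun c n x) atTop (nhds (Mfun c a x)) := by
  have tendsto_params : Tendsto (fun n : ℕ => (c / n, c - c / n)) atTop (𝓝[≠] 0 ×ˢ 𝓝 c) := by
    refine (tendsto_const_div_natCast_nhdsNE_zero hc.ne').prodMk ?_
    simpa using (tendsto_const_div_atTop_nhds_zero_nat c).const_sub c
  rw [Mfun_eq_mul_upperBetaIntegral]
  refine (((tendsto_upperBetaIntegral_div_mul_beta hx.1 hc).comp tendsto_params).const_mul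
    (a * c)).congr' ?_
  filter_upwards [eventually_ne_atTop 0] with n hn
  simp only [Function.comp_apply, Lfun_eq_upperBetaIntegral_div_beta]
  field_simp
end

section
/- Fix c > 0, a > 0 and γ > 0. For each integer n ≥ 2, L_n is a continuous strictly decreasing bijection from (0,1) onto (0,1); hence for every n ≥ 2 with γ/(a n) < 1 there is a unique x_n ∈ (0,1) with L_n(x_n) = γ/(a n). Then x_n → M^{−1}(γ) as n → ∞, where M^{−1} : (0,∞) → (0,1) is the inverse of the continuous strictly decreasing bijection M : (0,1) → (0,∞). -/
open MeasureTheory Filter Set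

/-!
Both functions are tails `∫_x^1 s^(α-1) (1-s)^(β-1) ds` of Beta integrals: `M = a c · tail(0, c)`,
and `L_n` is `tail(c/n, c - c/n)` divided by the complete integral `B(c/n, c - c/n)`. Away from the
singularity at `0` the tail is continuous in `(α, β)`, even at `α = 0`, whereas
`α B(α, β) = Γ(α + 1) Γ(β) / Γ(α + β) → 1` as `α → 0`. Hence `a n L_n → M` pointwise on `(0, 1)`.
The solutions of `a n L_n(x_n) = γ` then converge to that of `M(y) = γ`, since pointwise convergence
of decreasing functions to a strictly decreasing one traps `x_n` between any `z < y < z'`.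
-/

open scoped Topology

theorem tendsto_of_antitoneOn_of_strictAntiOn {ι X Y : Type*}
    [LinearOrder X] [DenselyOrdered X] [TopologicalSpace X] [OrderTopology X]
    [LinearOrder Y] [TopologicalSpace Y] [OrderClosedTopology Y]
    {l : Filter ι} {F : ι → X → Y} {G : X → Y} {S : Set X} {x : ι → X} {y : X}
    (hF : ∀ᶠ i in l, AntitoneOn (F i) S) (hG : StrictAntiOn G S)
    (hFG : ∀ z ∈ S, Tendsto (F · z) l (𝓝 (G z))) (hS : S ∈ 𝓝 y) (hxS : ∀ᶠ i in l, x i ∈ S)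
    (hx : Tendsto (fun i => F i (x i)) l (𝓝 (G y))) :
    Tendsto x l (𝓝 y) := by
  have hyS : y ∈ S := mem_of_mem_nhds hS
  refine tendsto_order.2 ⟨fun b hby => ?_, fun b hyb => ?_⟩
  · have := nhdsLT_neBot_of_exists_lt ⟨b, hby⟩
    obtain ⟨z, ⟨hbz, hzy⟩, hzS⟩ :=
      Filter.nonempty_of_mem (inter_mem (Ioo_mem_nhdsLT hby) (mem_nhdsWithin_of_mem_nhds hS))
    filter_upwards [hF, hxS, hx.eventually_lt (hFG z hzS) (hG hzS hyS hzy)] with i hFi hxi hlt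
    exact hbz.trans (hFi.reflect_lt hxi hzS hlt)
  · have := nhdsGT_neBot_of_exists_gt ⟨b, hyb⟩
    obtain ⟨z, ⟨hyz, hzb⟩, hzS⟩ :=
      Filter.nonempty_of_mem (inter_mem (Ioo_mem_nhdsGT hyb) (mem_nhdsWithin_of_mem_nhds hS))
    filter_upwards [hF, hxS, (hFG z hzS).eventually_lt hx (hG hyS hzS hyz)] with i hFi hxi hlt
    exact (hFi.reflect_lt hzS hxi hlt).trans hzb

section TailIntegral

variable {E : Type*} [NormedAddCommGroup E] [NormedSpace ℝ E] {a b : ℝ}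

theorem setIntegral_Ioo_eq_intervalIntegral (f : ℝ → E) (hab : a ≤ b) :
    ∫ s in Ioo a b, f s = ∫ s in a..b, f s := by
  rw [intervalIntegral.integral_of_le hab, integral_Ioc_eq_integral_Ioo]

theorem continuousOn_setIntegral_Ioo_left {f : ℝ → E} (hf : IntegrableOn f (Ioo a b)) :
    ContinuousOn (fun x => ∫ s in Ioo x b, f s) (Icc a b) := by
  rcases lt_or_ge b a with hba | hab
  · simp [Icc_eq_empty hba.not_ge]
  have hf' : IntegrableOn f (uIcc a b) := by
    rwa [uIcc_of_le hab, integrableOn_Icc_iff_integrableOn_Ioo]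
  have hcont := intervalIntegral.continuousOn_primitive_interval_left hf'
  rw [uIcc_of_le hab] at hcont
  exact hcont.congr fun x hx => setIntegral_Ioo_eq_intervalIntegral f hx.2

theorem strictAntiOn_setIntegral_Ioo_left {f : ℝ → ℝ} (hf : IntegrableOn f (Ioo a b))
    (hpos : ∀ s ∈ Ioo a b, 0 < f s) :
    StrictAntiOn (fun x => ∫ s in Ioo x b, f s) (Icc a b) := by
  intro x hx y hy hxy
  have hint {u v : ℝ} (hu : a ≤ u) (huv : u ≤ v) (hv : v ≤ b) :
      IntervalIntegrable f volume u v :=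
    (intervalIntegrable_iff_integrableOn_Ioo_of_le huv).2 (hf.mono_set (Ioo_subset_Ioo hu hv))
  have hxy_pos : 0 < ∫ s in x..y, f s :=
    intervalIntegral.intervalIntegral_pos_of_pos_on (hint hx.1 hxy.le hy.2)
      (fun s hs => hpos s ⟨hx.1.trans_lt hs.1, hs.2.trans_le hy.2⟩) hxy
  calc ∫ s in Ioo y b, f s = ∫ s in y..b, f s := setIntegral_Ioo_eq_intervalIntegral f hy.2
    _ < (∫ s in x..y, f s) + ∫ s in y..b, f s := lt_add_of_pos_left _ hxy_pos
    _ = ∫ s in x..b, f s := intervalIntegral.integral_add_adjacent_intervals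
        (hint hx.1 hxy.le hy.2) (hint hy.1 hy.2 le_rfl)
    _ = ∫ s in Ioo x b, f s := (setIntegral_Ioo_eq_intervalIntegral f hx.2).symm

end TailIntegral

/-- The integrand of the Beta integral with parameters `α` and `β`. -/
noncomputable def betaKernel (α β s : ℝ) : ℝ :=
  s ^ (α - 1) * (1 - s) ^ (β - 1)

/-- The upper incomplete Beta integral, over `(x, 1)`. For `x > 0` it is meaningful for every real
`α`, in particular for `α = 0`. -/
noncomputable def betaTail (α β x : ℝ) : ℝ :=
  ∫ s in Ioo x 1, betaKernel α β s

/-- The regularized upper incomplete Beta integral: for `α, β > 0` and `x ≥ 0`, the probability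
`P(X > x)` for `X` with the Beta distribution of parameters `α` and `β`. -/
noncomputable def regBetaTail (α β x : ℝ) : ℝ :=
  betaTail α β x / ProbabilityTheory.beta α β

section BetaTail

variable {α β s x : ℝ}

theorem measurable_betaKernel (α β : ℝ) : Measurable (betaKernel α β) := by
  unfold betaKernel
  fun_prop

theorem betaKernel_pos (hs : s ∈ Ioo 0 1) : 0 < betaKernel α β s :=
  mul_pos (Real.rpow_pos_of_pos hs.1 _) (Real.rpow_pos_of_pos (sub_pos.2 hs.2) _)

theorem betaKernel_le_betaKernel {α' β' : ℝ} (hs : s ∈ Ioo 0 1) (hα : α ≤ α') (hβ : β ≤ β') :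
    betaKernel α' β' s ≤ betaKernel α β s := by
  have hs' : 0 < 1 - s := sub_pos.2 hs.2
  exact mul_le_mul
    (Real.rpow_le_rpow_of_exponent_ge hs.1 hs.2.le (sub_le_sub_right hα 1))
    (Real.rpow_le_rpow_of_exponent_ge hs' (sub_le_self 1 hs.1.le) (sub_le_sub_right hβ 1))
    (Real.rpow_nonneg hs'.le _) (Real.rpow_nonneg hs.1.le _)

theorem continuousAt_betaKernel_params (hs : s ∈ Ioo 0 1) (p : ℝ × ℝ) :
    ContinuousAt (fun q : ℝ × ℝ => betaKernel q.1 q.2 s) p := by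
  have hs' : 1 - s ≠ 0 := (sub_pos.2 hs.2).ne'
  exact (continuousAt_const.rpow (by fun_prop) (.inl hs.1.ne')).mul
    (continuousAt_const.rpow (by fun_prop) (.inl hs'))

theorem ofReal_betaKernel (hs : s ∈ Ioo 0 1) :
    (betaKernel α β s : ℂ) = (s : ℂ) ^ ((α : ℂ) - 1) * (1 - (s : ℂ)) ^ ((β : ℂ) - 1) := by
  rw [betaKernel, Complex.ofReal_mul, Complex.ofReal_cpow hs.1.le,
    Complex.ofReal_cpow (sub_pos.2 hs.2).le]
  push_cast
  rfl

theorem integrableOn_betaKernel (hα : 0 < α) (hβ : 0 < β) :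
    IntegrableOn (betaKernel α β) (Ioo 0 1) := by
  have hconv := Complex.betaIntegral_convergent (u := α) (v := β) (by simpa) (by simpa)
  rw [intervalIntegrable_iff_integrableOn_Ioo_of_le zero_le_one] at hconv
  have hofReal : IntegrableOn (fun s => (betaKernel α β s : ℂ)) (Ioo 0 1) :=
    hconv.congr_fun (fun s hs => (ofReal_betaKernel hs).symm) measurableSet_Ioo
  exact hofReal.re

theorem integrableOn_betaKernel_of_pos_left (α : ℝ) (hβ : 0 < β) (hx : 0 < x) :
    IntegrableOn (betaKernel α β) (Ioo x 1) := by
  rcases le_or_gt 1 x with hx1 | hx1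
  · simp [Ioo_eq_empty hx1.not_gt]
  have hright : IntervalIntegrable (fun s : ℝ => (1 - s) ^ (β - 1)) volume x 1 := by
    simpa using (intervalIntegral.intervalIntegrable_rpow' (a := 1 - x) (b := 1 - 1)
      (by linarith : -1 < β - 1)).comp_sub_left 1
  have hleft : ContinuousOn (fun s : ℝ => s ^ (α - 1)) (uIcc x 1) := by
    rw [uIcc_of_le hx1.le]
    exact continuousOn_id.rpow_const fun s hs => .inl (hx.trans_le hs.1).ne'
  exact (intervalIntegrable_iff_integrableOn_Ioo_of_le hx1.le).1 (hright.continuousOn_mul hleft)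

theorem betaTail_zero (hα : 0 < α) (hβ : 0 < β) :
    betaTail α β 0 = ProbabilityTheory.beta α β := by
  have hofReal : Complex.betaIntegral α β = (betaTail α β 0 : ℂ) := by
    rw [Complex.betaIntegral, intervalIntegral.integral_of_le zero_le_one,
      integral_Ioc_eq_integral_Ioo, betaTail, ← integral_complex_ofReal]
    exact setIntegral_congr_fun measurableSet_Ioo fun s hs => (ofReal_betaKernel hs).symm
  rw [ProbabilityTheory.beta_eq_betaIntegralReal α β hα hβ, hofReal, Complex.ofReal_re]

theorem strictAntiOn_betaTail (hx : 0 ≤ x) (hint : IntegrableOn (betaKernel α β) (Ioo x 1)) :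
    StrictAntiOn (betaTail α β) (Icc x 1) :=
  strictAntiOn_setIntegral_Ioo_left hint fun _ hs => betaKernel_pos ⟨hx.trans_lt hs.1, hs.2⟩

theorem strictAntiOn_betaTail_Ioc (α : ℝ) (hβ : 0 < β) : StrictAntiOn (betaTail α β) (Ioc 0 1) :=
  fun _ hx _ hy hxy =>
    strictAntiOn_betaTail hx.1.le (integrableOn_betaKernel_of_pos_left α hβ hx.1)
      (left_mem_Icc.2 hx.2) ⟨hxy.le, hy.2⟩ hxy

theorem continuousAt_betaTail_params (α : ℝ) (hβ : 0 < β) (hx : 0 < x) :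
    ContinuousAt (fun p : ℝ × ℝ => betaTail p.1 p.2 x) (α, β) := by
  have hα_near : ∀ᶠ p : ℝ × ℝ in 𝓝 (α, β), α - 1 ≤ p.1 :=
    continuousAt_fst.eventually_const_le (sub_one_lt α)
  have hβ_near : ∀ᶠ p : ℝ × ℝ in 𝓝 (α, β), β / 2 ≤ p.2 :=
    continuousAt_snd.eventually_const_le (half_lt_self hβ)
  refine continuousAt_of_dominated (bound := betaKernel (α - 1) (β / 2))
    (.of_forall fun p => (measurable_betaKernel p.1 p.2).aestronglyMeasurable) ?_
    (integrableOn_betaKernel_of_pos_left (α - 1) (half_pos hβ) hx) ?_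
  · filter_upwards [hα_near, hβ_near] with p hp₁ hp₂
    refine ae_restrict_of_forall_mem measurableSet_Ioo fun s hs => ?_
    have hs' : s ∈ Ioo 0 1 := ⟨hx.trans hs.1, hs.2⟩
    rw [Real.norm_of_nonneg (betaKernel_pos hs').le]
    exact betaKernel_le_betaKernel hs' hp₁ hp₂
  · exact ae_restrict_of_forall_mem measurableSet_Ioo fun s hs =>
      continuousAt_betaKernel_params ⟨hx.trans hs.1, hs.2⟩ _

theorem regBetaTail_zero (hα : 0 < α) (hβ : 0 < β) : regBetaTail α β 0 = 1 := by
  rw [regBetaTail, betaTail_zero hα hβ, div_self (ProbabilityTheory.beta_pos hα hβ).ne']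

theorem regBetaTail_one (α β : ℝ) : regBetaTail α β 1 = 0 := by
  simp [regBetaTail, betaTail]

theorem continuousOn_regBetaTail (hα : 0 < α) (hβ : 0 < β) :
    ContinuousOn (regBetaTail α β) (Icc 0 1) :=
  (continuousOn_setIntegral_Ioo_left (integrableOn_betaKernel hα hβ)).div_const _

theorem strictAntiOn_regBetaTail (hα : 0 < α) (hβ : 0 < β) :
    StrictAntiOn (regBetaTail α β) (Icc 0 1) := fun _ hx _ hy hxy =>
  div_lt_div_of_pos_right
    (strictAntiOn_betaTail le_rfl (integrableOn_betaKernel hα hβ) hx hy hxy)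
    (ProbabilityTheory.beta_pos hα hβ)

theorem bijOn_regBetaTail (hα : 0 < α) (hβ : 0 < β) :
    BijOn (regBetaTail α β) (Ioo 0 1) (Ioo 0 1) := by
  have hanti := strictAntiOn_regBetaTail hα hβ
  have himage := (continuousOn_regBetaTail hα hβ).image_Ioo_of_strictAntiOn zero_le_one hanti
  rw [regBetaTail_zero hα hβ, regBetaTail_one] at himage
  exact ⟨mapsTo_iff_image_subset.2 himage.subset, hanti.injOn.mono Ioo_subset_Icc_self,
    himage.superset⟩

end BetaTail

section SmallParameter

variable {β x : ℝ}

theorem continuousAt_Gamma_of_pos (hx : 0 < x) : ContinuousAt Real.Gamma x :=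
  (Real.differentiableOn_Gamma_Ioi.differentiableAt (Ioi_mem_nhds hx)).continuousAt

theorem tendsto_self_mul_Gamma : Tendsto (fun t : ℝ => t * Real.Gamma t) (𝓝[≠] 0) (𝓝 1) := by
  have hcont : ContinuousAt (fun t : ℝ => Real.Gamma (t + 1)) 0 :=
    ContinuousAt.comp (g := Real.Gamma) (continuousAt_Gamma_of_pos (by norm_num)) (by fun_prop)
  have hlim : Tendsto (fun t : ℝ => Real.Gamma (t + 1)) (𝓝[≠] 0) (𝓝 1) := by
    simpa using hcont.tendsto.mono_left nhdsWithin_le_nhds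
  exact hlim.congr' (eventually_mem_nhdsWithin.mono fun t ht => Real.Gamma_add_one ht)

theorem tendsto_self_mul_beta (hβ : 0 < β) :
    Tendsto (fun p : ℝ × ℝ => p.1 * ProbabilityTheory.beta p.1 p.2) (𝓝[≠] 0 ×ˢ 𝓝 β) (𝓝 1) := by
  have hΓ := continuousAt_Gamma_of_pos hβ
  have hsum : Tendsto (fun p : ℝ × ℝ => p.1 + p.2) (𝓝[≠] 0 ×ˢ 𝓝 β) (𝓝 β) := by
    simpa using (tendsto_fst.mono_right (nhdsWithin_le_nhds (a := (0 : ℝ)))).add tendsto_snd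
  have hlim := ((tendsto_self_mul_Gamma.comp tendsto_fst).mul (hΓ.tendsto.comp tendsto_snd)).div
    (hΓ.tendsto.comp hsum) (Real.Gamma_pos_of_pos hβ).ne'
  rw [one_mul, div_self (Real.Gamma_pos_of_pos hβ).ne'] at hlim
  refine hlim.congr fun p => ?_
  simp only [Function.comp_apply, ProbabilityTheory.beta, Pi.div_apply]
  ring

theorem tendsto_inv_mul_regBetaTail (hβ : 0 < β) (hx : 0 < x) :
    Tendsto (fun p : ℝ × ℝ => p.1⁻¹ * regBetaTail p.1 p.2 x) (𝓝[≠] 0 ×ˢ 𝓝 β)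
      (𝓝 (betaTail 0 β x)) := by
  have htail : Tendsto (fun p : ℝ × ℝ => betaTail p.1 p.2 x) (𝓝[≠] 0 ×ˢ 𝓝 β)
      (𝓝 (betaTail 0 β x)) :=
    (continuousAt_betaTail_params 0 hβ hx).tendsto.mono_left <| by
      rw [nhds_prod_eq]
      exact prod_mono nhdsWithin_le_nhds le_rfl
  have hlim := htail.div (tendsto_self_mul_beta hβ) one_ne_zero
  rw [div_one] at hlim
  refine hlim.congr fun p => ?_
  simp only [Pi.div_apply, regBetaTail]
  ring

end SmallParameter

section LfunMfun

variable {c a : ℝ} {n : ℕ}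

theorem Lfun_eq_regBetaTail (c : ℝ) (n : ℕ) : Lfun c n = regBetaTail (c / n) (c - c / n) := by
  ext x
  have hexp : c * (1 - 1 / (n : ℝ)) = c - c / n := by ring
  rw [Lfun, regBetaTail, ProbabilityTheory.beta, add_sub_cancel, hexp, div_div_eq_mul_div,
    div_mul_eq_mul_div, mul_comm (Real.Gamma c)]
  rfl

theorem Mfun_eq_betaTail (c a : ℝ) : Mfun c a = fun x => a * c * betaTail 0 c x := by
  ext x
  simp only [Mfun, betaTail, betaKernel, zero_sub]

theorem div_natCast_and_sub_pos (hc : 0 < c) (hn : 1 < n) : 0 < c / n ∧ 0 < c - c / n :=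
  ⟨div_pos hc (Nat.cast_pos.2 (zero_lt_one.trans hn)),
    sub_pos.2 (div_lt_self hc (Nat.one_lt_cast.2 hn))⟩

theorem continuousOn_Lfun (hc : 0 < c) (hn : 1 < n) : ContinuousOn (Lfun c n) (Ioo 0 1) := by
  obtain ⟨hα, hβ⟩ := div_natCast_and_sub_pos hc hn
  rw [Lfun_eq_regBetaTail]
  exact (continuousOn_regBetaTail hα hβ).mono Ioo_subset_Icc_self

theorem strictAntiOn_Lfun (hc : 0 < c) (hn : 1 < n) : StrictAntiOn (Lfun c n) (Ioo 0 1) := by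
  obtain ⟨hα, hβ⟩ := div_natCast_and_sub_pos hc hn
  rw [Lfun_eq_regBetaTail]
  exact (strictAntiOn_regBetaTail hα hβ).mono Ioo_subset_Icc_self

theorem bijOn_Lfun (hc : 0 < c) (hn : 1 < n) : BijOn (Lfun c n) (Ioo 0 1) (Ioo 0 1) := by
  obtain ⟨hα, hβ⟩ := div_natCast_and_sub_pos hc hn
  rw [Lfun_eq_regBetaTail]
  exact bijOn_regBetaTail hα hβ

theorem strictAntiOn_Mfun (hc : 0 < c) (ha : 0 < a) : StrictAntiOn (Mfun c a) (Ioo 0 1) := by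
  rw [Mfun_eq_betaTail]
  exact (strictMono_mul_left_of_pos (mul_pos ha hc)).comp_strictAntiOn
    ((strictAntiOn_betaTail_Ioc 0 hc).mono Ioo_subset_Ioc_self)

theorem tendsto_mul_Lfun (hc : 0 < c) (a : ℝ) {x : ℝ} (hx : 0 < x) :
    Tendsto (fun n : ℕ => a * n * Lfun c n x) atTop (𝓝 (Mfun c a x)) := by
  have hzero : Tendsto (fun n : ℕ => c / (n : ℝ)) atTop (𝓝 0) :=
    tendsto_const_div_atTop_nhds_zero_nat c
  have hne : Tendsto (fun n : ℕ => c / (n : ℝ)) atTop (𝓝[≠] 0) :=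
    tendsto_nhdsWithin_iff.2 ⟨hzero, (eventually_ne_atTop 0).mono fun n hn =>
      div_ne_zero hc.ne' (Nat.cast_ne_zero.2 hn)⟩
  have hsub : Tendsto (fun n : ℕ => c - c / (n : ℝ)) atTop (𝓝 c) := by
    simpa using hzero.const_sub c
  rw [Mfun_eq_betaTail]
  refine (((tendsto_inv_mul_regBetaTail hc hx).comp (hne.prodMk hsub)).const_mul
    (a * c)).congr fun n => ?_
  rw [Lfun_eq_regBetaTail, Function.comp_apply, inv_div]
  field_simp

end LfunMfun

/-- each `L_n` (n ≥ 2) is a continuous strictly decreasing bijection from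
`(0,1)` onto `(0,1)`; for `γ/(a n) < 1` there is a unique `x_n ∈ (0,1)` with
`L_n(x_n) = γ/(a n)`; and `x_n → M⁻¹(γ)`, i.e. `x_n` converges to the unique
`y ∈ (0,1)` with `M(y) = γ`. -/
theorem Lfun_inverse_tendsto (c a γ : ℝ) (hc : 0 < c) (ha : 0 < a) (hγ : 0 < γ) :
    (∀ n : ℕ, 2 ≤ n → ContinuousOn (Lfun c n) (Ioo 0 1) ∧
        StrictAntiOn (Lfun c n) (Ioo 0 1) ∧ Set.BijOn (Lfun c n) (Ioo 0 1) (Ioo 0 1)) ∧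
      (∀ n : ℕ, 2 ≤ n → γ / (a * n) < 1 →
        ∃! x : ℝ, x ∈ Ioo (0 : ℝ) 1 ∧ Lfun c n x = γ / (a * n)) ∧
      (∀ x : ℕ → ℝ,
        (∀ n : ℕ, 2 ≤ n → γ / (a * n) < 1 →
          x n ∈ Ioo (0 : ℝ) 1 ∧ Lfun c n (x n) = γ / (a * n)) →
        ∀ y : ℝ, y ∈ Ioo (0 : ℝ) 1 → Mfun c a y = γ →
          Tendsto x atTop (nhds y)) := by
  refine ⟨fun n hn => ⟨continuousOn_Lfun hc hn, strictAntiOn_Lfun hc hn, bijOn_Lfun hc hn⟩, ?_, ?_⟩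
  · intro n hn hlt
    have hpos : 0 < γ / (a * n) := by positivity
    obtain ⟨x, hx, hLx⟩ := (bijOn_Lfun hc hn).surjOn ⟨hpos, hlt⟩
    exact ⟨x, ⟨hx, hLx⟩, fun z hz => (bijOn_Lfun hc hn).injOn hz.1 hx (hz.2.trans hLx.symm)⟩
  · intro x hx y hy hMy
    have hlt : ∀ᶠ n : ℕ in atTop, γ / (a * n) < 1 := by
      simpa only [div_div] using
        (tendsto_const_div_atTop_nhds_zero_nat (γ / a)).eventually_lt_const one_pos
    have hsol : ∀ᶠ n : ℕ in atTop, x n ∈ Ioo 0 1 ∧ a * n * Lfun c n (x n) = γ := by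
      filter_upwards [eventually_ge_atTop 2, hlt] with n hn hlt
      obtain ⟨hxn, hLx⟩ := hx n hn hlt
      exact ⟨hxn, by rw [hLx, mul_div_cancel₀]; positivity⟩
    refine tendsto_of_antitoneOn_of_strictAntiOn (F := fun n z => a * n * Lfun c n z) ?_
      (strictAntiOn_Mfun hc ha) (fun z hz => tendsto_mul_Lfun hc a hz.1)
      (Ioo_mem_nhds hy.1 hy.2) (hsol.mono fun _ h => h.1) ?_
    · filter_upwards [eventually_ge_atTop 2] with n hn
      exact (monotone_mul_left_of_nonneg (by positivity)).comp_antitoneOn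
        (strictAntiOn_Lfun hc hn).antitoneOn
    · exact hMy ▸ tendsto_const_nhds.congr' (hsol.mono fun _ h => h.2.symm)
end
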